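/- Let b ≥ 2 be an integer base and let A ⊆ [0,1) be a half-open interval. If A ≠ [0,1), let r ≥ 1 be the smallest positive integer for which A can be written as A = [h·b^{1−r} + g·b^{−r} − z, h·b^{1−r} + G·b^{−r} + Z) with an integer h ≥ 0, integers 1 ≤ g ≤ G ≤ b−1, and reals z, Z ∈ [0, b^{−r}); if A = [0,1), let r = 1. Then there exist nonnegative real sequences (α_k)_{k≥0} and (τ_k)_{k≥0} such that Σ_{k≥0} (α_k + τ_k) = Vol(A × A) (the square of the length of A), and for every i ∈ ℕ: V_i(A × A) = Σ_{k≥0} α_k · (b^{2(k+r+1)}/4) · V_i(Y_k^{(r−1)} × Y_k^{(r−1)}) + Σ_{k≥0} τ_k · b^{2k} · V_i(1_k × 1_k). -/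

import Mathlib

open MeasureTheory

/-- `γ_b(x,y)`: the exact number of initial common base-`b` digits of `x, y ∈ [0,1)`,
i.e. the unique `i ≥ 0` with `⌊b^i x⌋ = ⌊b^i y⌋` but `⌊b^{i+1} x⌋ ≠ ⌊b^{i+1} y⌋`
when `x ≠ y`, and `∞` when `x = y`. -/
noncomputable def gammaB (b : ℕ) (x y : ℝ) : ℕ∞ :=
  if x = y then ⊤
  else ((sInf {i : ℕ | ⌊(b : ℝ) ^ i * x⌋ = ⌊(b : ℝ) ^ i * y⌋ ∧
      ⌊(b : ℝ) ^ (i + 1) * x⌋ ≠ ⌊(b : ℝ) ^ (i + 1) * y⌋} : ℕ) : ℕ∞)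

/-- `V_i(A × B)`: the 2-dimensional Lebesgue measure of
`{(x,y) ∈ A × B : x ≠ y, γ_b(x,y) = i}`. -/
noncomputable def Vvec (b : ℕ) (A B : Set ℝ) (i : ℕ) : ℝ :=
  (volume {p : ℝ × ℝ | p.1 ∈ A ∧ p.2 ∈ B ∧ p.1 ≠ p.2 ∧ gammaB b p.1 p.2 = (i : ℕ∞)}).toReal

/-- `A` admits the representation
`A = [h·b^{1−r} + g·b^{−r} − z, h·b^{1−r} + G·b^{−r} + Z)` with an integer `h ≥ 0`,
integers `1 ≤ g ≤ G ≤ b−1`, and reals `z, Z ∈ [0, b^{−r})`. -/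
def IsRep (b : ℕ) (A : Set ℝ) (r : ℕ) : Prop :=
  ∃ (h g G : ℕ) (z Z : ℝ), 1 ≤ g ∧ g ≤ G ∧ G + 1 ≤ b ∧
    0 ≤ z ∧ z < (b : ℝ) ^ (-(r : ℤ)) ∧ 0 ≤ Z ∧ Z < (b : ℝ) ^ (-(r : ℤ)) ∧
    A = Set.Ico ((h : ℝ) * (b : ℝ) ^ (1 - (r : ℤ)) + (g : ℝ) * (b : ℝ) ^ (-(r : ℤ)) - z)
                ((h : ℝ) * (b : ℝ) ^ (1 - (r : ℤ)) + (G : ℝ) * (b : ℝ) ^ (-(r : ℤ)) + Z)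

/-- The elementary (anchored) `k`-interval `1_k = [0, b^{−k})`. -/
def oneK (b k : ℕ) : Set ℝ := Set.Ico 0 ((b : ℝ) ^ (-(k : ℤ)))

/-- The elementary unanchored `(d,k)`-interval
`Y_k^{(d)} = [b^{−(d+1)} − b^{−(2+k+d)}, b^{−(d+1)} + b^{−(2+k+d)})`. -/
def Yint (b k d : ℕ) : Set ℝ :=
  Set.Ico ((b : ℝ) ^ (-((d : ℤ) + 1)) - (b : ℝ) ^ (-((2 : ℤ) + k + d)))
          ((b : ℝ) ^ (-((d : ℤ) + 1)) + (b : ℝ) ^ (-((2 : ℤ) + k + d)))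

/-- The geometric sequence `((1 - 1/b) b^(k-i))_i` started at index `k`. -/
noncomputable def geomFrom (b : ℝ) (k i : ℕ) : ℝ :=
  if k ≤ i then (1 - 1 / b) * (b ^ k / b ^ i) else 0

/-- The predecessor sequence `0, v 0, v 1, …`. -/
def delay (v : ℕ → ℝ) : ℕ → ℝ
  | 0 => 0
  | j + 1 => v j

/-- The coefficients of `v` in the basis `geomFrom b k`. -/
noncomputable def geomCoeff (b : ℝ) (v : ℕ → ℝ) (j : ℕ) : ℝ :=
  (b * v j - delay v j) / (b - 1)

lemma sum_geomCoeff_mul_pow {b : ℝ} (hb : 2 ≤ b) (v : ℕ → ℝ) (i : ℕ) :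
    ∑ k ∈ Finset.range (i + 1), geomCoeff b v k * b ^ k = b / (b - 1) * (v i * b ^ i) := by
  have h1 : b - 1 ≠ 0 := by linarith
  induction i with
  | zero => simp [geomCoeff, delay]; ring
  | succ i ih =>
    rw [Finset.sum_range_succ, ih]
    simp only [geomCoeff, delay]
    field_simp
    ring

lemma hasSum_geomCoeff_mul {b : ℝ} (hb : 2 ≤ b) (v : ℕ → ℝ) (i : ℕ) :
    HasSum (fun k => geomCoeff b v k * geomFrom b k i) (v i) := by
  have h1 : b - 1 ≠ 0 := by linarith
  have h0 : b ≠ 0 := by linarith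
  have key : v i = ∑ k ∈ Finset.range (i + 1), geomCoeff b v k * geomFrom b k i := by
    have : ∀ k ∈ Finset.range (i + 1), geomCoeff b v k * geomFrom b k i =
        (geomCoeff b v k * b ^ k) * ((1 - 1 / b) / b ^ i) := by
      intro k hk
      have : k ≤ i := by simpa [Nat.lt_succ_iff] using hk
      simp only [geomFrom, this, if_true]
      ring
    rw [Finset.sum_congr rfl this, ← Finset.sum_mul, sum_geomCoeff_mul_pow hb]
    field_simp
  rw [key]
  apply hasSum_sum_of_ne_finset_zero
  intro k hk
  have : ¬ k ≤ i := by simpa [Nat.lt_succ_iff] using hk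
  simp [geomFrom, this]

lemma hasSum_geomCoeff {b s : ℝ} (hb : 2 ≤ b) {v : ℕ → ℝ} (hv : HasSum v s) :
    HasSum (geomCoeff b v) s := by
  have h1 : b - 1 ≠ 0 := by linarith
  have hd : HasSum (delay v) s := by
    have := (hasSum_nat_add_iff (f := delay v) (g := s) 1).1 (by simpa [delay] using hv)
    simpa [delay] using this
  have := ((hv.mul_left b).sub hd).div_const (b - 1)
  have e : (b * s - s) / (b - 1) = s := by field_simp
  rw [e] at this
  exact this

lemma hasSum_sub_succ {M : ℕ → ℝ} (hM : Filter.Tendsto M Filter.atTop (nhds 0))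
    (hanti : ∀ i, 0 ≤ M i - M (i + 1)) (n : ℕ) :
    HasSum (fun i => M (i + n) - M (i + n + 1)) (M n) := by
  rw [hasSum_iff_tendsto_nat_of_nonneg (fun i => hanti _)]
  have : ∀ m, ∑ i ∈ Finset.range m, (M (i + n) - M (i + n + 1)) = M n - M (m + n) := by
    intro m
    induction m with
    | zero => simp
    | succ m ih => rw [Finset.sum_range_succ, ih, show m + 1 + n = m + n + 1 by omega]; ring
  simp only [this]
  simpa using ((Filter.tendsto_add_atTop_iff_nat n).2 hM).const_sub (M n)

theorem exists_geom_decomp {b : ℝ} (hb : 2 ≤ b) (d : ℕ) (v M : ℕ → ℝ)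
    (hv : ∀ i, v i = M i - M (i + 1)) (hpos : ∀ i, 0 ≤ v i)
    (hM : Filter.Tendsto M Filter.atTop (nhds 0)) (hlow : ∀ i < d, v i = 0)
    (hmono : ∀ i, d + 1 ≤ i → v i ≤ b * v (i + 1))
    (hkey : v d - b * v (d + 1) ≤ (b * M (d + 2) - M (d + 1)) / (b - 1)) :
    ∃ α τ : ℕ → ℝ, (∀ k, 0 ≤ α k) ∧ (∀ k, 0 ≤ τ k) ∧ (∑' k, (α k + τ k)) = M 0 ∧
      ∀ i, v i = (∑' k, α k * ((if i = d then 1 / 2 else 0) + 1 / 2 * geomFrom b (d + 2 + k) i)) +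
        ∑' k, τ k * geomFrom b k i := by
  have h1 : 0 < b - 1 := by linarith
  have h0 : 0 < b := by linarith
  set w : ℕ → ℝ := fun i => if i ≤ d + 1 then 0 else v i - v (d + 1) * (b ^ (d + 1) / b ^ i) with hw
  set C : ℝ := (b * M (d + 2) - M (d + 1)) / (b - 1) with hC
  have hwlow : ∀ i, i ≤ d + 1 → w i = 0 := fun i hi => by simp [hw, hi]
  have hwge : ∀ i, d + 1 ≤ i → w i = v i - v (d + 1) * (b ^ (d + 1) / b ^ i) := by
    intro i hi
    rcases hi.eq_or_lt with rfl | hi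
    · have : b ^ (d + 1) ≠ 0 := by positivity
      simp [hw, this]
    · simp [hw, Nat.not_le.2 hi]
  have hcwlow : ∀ k, k < d + 2 → geomCoeff b w k = 0 := by
    intro k hk
    cases k with
    | zero => simp [geomCoeff, delay, hwlow]
    | succ k => simp [geomCoeff, delay, hwlow k (by omega), hwlow (k + 1) (by omega)]
  have hcw : ∀ j, d + 1 ≤ j → geomCoeff b w (j + 1) = (b * v (j + 1) - v j) / (b - 1) := by
    intro j hj
    simp only [geomCoeff, delay]
    rw [hwge j hj, hwge (j + 1) (by omega)]
    congr 1
    field_simp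
    ring
  have hcwpos : ∀ k, 0 ≤ geomCoeff b w k := by
    intro k
    by_cases hk : k < d + 2
    · rw [hcwlow k hk]
    · obtain ⟨j, rfl⟩ : ∃ j, k = j + 1 := ⟨k - 1, by omega⟩
      rw [hcw j (by omega)]
      exact div_nonneg (by linarith [hmono j (by omega)]) h1.le
  have hanti : ∀ i, 0 ≤ M i - M (i + 1) := fun i => by rw [← hv]; exact hpos i
  have hvsum : HasSum v (M 0) := by
    have := hasSum_sub_succ hM hanti 0
    simpa [← hv] using this
  have hwsum : HasSum w C := by
    have a1 := hasSum_sub_succ hM hanti (d + 2)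
    have a2 := (hasSum_geometric_of_lt_one (r := 1 / b) (by positivity)
      (by rw [div_lt_one h0]; linarith)).mul_left (v (d + 1) / b)
    have a3 := a1.sub a2
    have a4 : M (d + 2) - v (d + 1) / b * (1 - 1 / b)⁻¹ = C := by
      rw [hC, hv (d + 1)]
      have : 1 - 1 / b ≠ 0 := by
        have : 1 / b < 1 := by rw [div_lt_one h0]; linarith
        linarith
      have h1' := h1.ne'
      field_simp
      ring
    rw [a4] at a3
    have a5 := (hasSum_nat_add_iff (f := w) (g := C) (d + 2)).1 (by
      convert a3 using 2 with i
      rw [hwge _ (by omega), hv (i + (d + 2))]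
      congr 1
      rw [show i + (d + 2) = (d + 1) + 1 + i by omega, pow_add b (d + 1 + 1), pow_succ b (d + 1),
        one_div, inv_pow]
      field_simp)
    have a6 : ∑ i ∈ Finset.range (d + 2), w i = 0 :=
      Finset.sum_eq_zero fun i hi => hwlow i (by have := Finset.mem_range.1 hi; omega)
    rwa [a6, add_zero] at a5
  have hcwsum := hasSum_geomCoeff hb hwsum
  have hCpos : 0 ≤ C := hcwsum.nonneg hcwpos
  set S : ℝ := max 0 (2 * (v d - b * v (d + 1))) with hS
  have hS0 : 0 ≤ S := le_max_left _ _
  have hS1 : 2 * (v d - b * v (d + 1)) ≤ S := le_max_right _ _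
  have hS2 : S ≤ 2 * C := max_le (by linarith) (by linarith)
  have hS3 : S ≤ 2 * v d := max_le (by linarith [hpos d]) (by nlinarith [hpos (d + 1)])
  obtain ⟨l, hl0, hl1, hlC⟩ : ∃ l : ℝ, 0 ≤ l ∧ l ≤ 1 ∧ l * C = S / 2 := by
    rcases hCpos.eq_or_lt with h | h
    · exact ⟨0, le_rfl, zero_le_one, by linarith⟩
    · refine ⟨S / 2 / C, by positivity, by rw [div_le_one h]; linarith, by field_simp⟩
  set y : ℕ → ℝ := fun i => v i - l * w i - (if i = d then S / 2 else 0) with hy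
  have hshift : ∀ (f : ℕ → ℝ) (s : ℝ), (∀ k < d + 2, f k = 0) → HasSum f s →
      HasSum (fun k => f (d + 2 + k)) s := by
    intro f s hf hs
    have e : ∑ i ∈ Finset.range (d + 2), f i = 0 :=
      Finset.sum_eq_zero fun i hi => hf i (Finset.mem_range.1 hi)
    have := (hasSum_nat_add_iff (f := f) (g := s) (d + 2)).2 (by rwa [e, add_zero])
    simpa only [add_comm] using this
  have hαsum : HasSum (fun k => 2 * l * geomCoeff b w (d + 2 + k)) S := by
    have := (hshift _ _ hcwlow hcwsum).mul_left (2 * l)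
    rwa [show 2 * l * C = S by linarith] at this
  have hysum : HasSum y (M 0 - S / 2 - S / 2) := by
    have a := (hvsum.sub (hwsum.mul_left l)).sub (hasSum_ite_eq d (S / 2))
    rwa [hlC] at a
  refine ⟨fun k => 2 * l * geomCoeff b w (d + 2 + k), geomCoeff b y,
    fun k => mul_nonneg (by linarith) (hcwpos _), ?_, ?_, ?_⟩
  · intro k
    rcases lt_trichotomy k d with h | rfl | h
    · cases k with
      | zero =>
        simp [geomCoeff, delay, hy, h.ne, hlow _ h, hwlow 0 (by omega)]
      | succ k =>
        have h' : k ≠ d := by omega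
        simp [geomCoeff, delay, hy, h.ne, h', hlow _ h, hlow k (by omega), hwlow k (by omega),
          hwlow (k + 1) (by omega)]
    · have e : delay y k = 0 := by
        cases k with
        | zero => rfl
        | succ k => simp [delay, hy, hlow k (by omega), hwlow k (by omega)]
      rw [geomCoeff, e]
      refine div_nonneg ?_ h1.le
      simp only [hy, hwlow k (by omega), if_true]
      nlinarith
    · obtain ⟨j, rfl⟩ : ∃ j, k = j + 1 := ⟨k - 1, by omega⟩
      rcases (show d ≤ j by omega).eq_or_lt with rfl | hj
      · simp only [geomCoeff, delay, hy, hwlow d (by omega), hwlow (d + 1) le_rfl]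
        refine div_nonneg ?_ h1.le
        simp
        linarith
      · have e : geomCoeff b y (j + 1) = (1 - l) * ((b * v (j + 1) - v j) / (b - 1)) := by
          have e1 := hcw j (by omega)
          have h2 : j + 1 ≠ d := by omega
          have e2 : geomCoeff b y (j + 1) =
              (b * v (j + 1) - v j) / (b - 1) - l * geomCoeff b w (j + 1) := by
            simp only [geomCoeff, delay, hy, h2, hj.ne', if_false]
            ring
          rw [e2, e1]; ring
        rw [e]
        exact mul_nonneg (by linarith)
          (div_nonneg (by linarith [hmono j (by omega)]) h1.le)
  · rw [(hαsum.add (hasSum_geomCoeff hb hysum)).tsum_eq]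
    ring
  · intro i
    rw [(hasSum_geomCoeff_mul hb y i).tsum_eq]
    have a1 := hshift (fun k => geomCoeff b w k * geomFrom b k i) (w i)
      (fun k hk => by simp [hcwlow k hk]) (hasSum_geomCoeff_mul hb w i)
    have a2 := (hαsum.mul_right (if i = d then (1 / 2 : ℝ) else 0)).add (a1.mul_left l)
    have a3 : ∀ k, 2 * l * geomCoeff b w (d + 2 + k) *
        ((if i = d then 1 / 2 else 0) + 1 / 2 * geomFrom b (d + 2 + k) i) =
        2 * l * geomCoeff b w (d + 2 + k) * (if i = d then (1 / 2 : ℝ) else 0) +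
        l * (geomCoeff b w (d + 2 + k) * geomFrom b (d + 2 + k) i) := fun k => by ring
    simp only [a3]
    rw [a2.tsum_eq]
    by_cases h : i = d <;> simp [hy, h]
    ring

/-- The number of full unit cells in `[0, x)` plus the square of the length of the last one. -/
noncomputable def cellSq (x : ℝ) : ℝ := ⌊x⌋ + Int.fract x ^ 2

lemma cellSq_natCast_add (n : ℕ) {t : ℝ} (h0 : 0 ≤ t) (h1 : t < 1) :
    cellSq (n + t) = n + t ^ 2 := by
  have hf : ⌊t⌋ = 0 := Int.floor_eq_zero_iff.2 ⟨h0, h1⟩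
  have : Int.fract t = t := Int.fract_eq_self.2 ⟨h0, h1⟩
  simp [cellSq, hf, this]

lemma exists_digit {b : ℕ} (hb : 2 ≤ b) (x : ℝ) : ∃ D : ℤ, 0 ≤ D ∧ D + 1 ≤ b ∧
    ⌊(b : ℝ) * x⌋ = b * ⌊x⌋ + D ∧ Int.fract ((b : ℝ) * x) = b * Int.fract x - D := by
  have hb' : (2 : ℝ) ≤ b := by exact_mod_cast hb
  have e : (b : ℝ) * x = ((b * ⌊x⌋ : ℤ) : ℝ) + b * Int.fract x := by
    push_cast
    nth_rewrite 1 [← Int.floor_add_fract x]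
    ring
  have f0 := Int.fract_nonneg x
  have f1 := Int.fract_lt_one x
  have hfl : ⌊(b : ℝ) * x⌋ = b * ⌊x⌋ + ⌊(b : ℝ) * Int.fract x⌋ := by
    rw [e, Int.floor_intCast_add]
  refine ⟨⌊(b : ℝ) * Int.fract x⌋, Int.floor_nonneg.2 (by positivity), ?_, hfl, ?_⟩
  · have : ⌊(b : ℝ) * Int.fract x⌋ < b := by
      rw [Int.floor_lt]; push_cast; nlinarith
    omega
  · rw [Int.fract, hfl, e]; push_cast; ring

lemma cellSq_le (x : ℝ) : cellSq x ≤ x := by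
  have f0 := Int.fract_nonneg x
  have f1 := Int.fract_lt_one x
  have := Int.floor_add_fract x
  unfold cellSq; nlinarith

lemma cellSq_convex {b : ℕ} (hb : 2 ≤ b) (x : ℝ) :
    (b : ℝ) ^ 3 * cellSq x + cellSq (b * (b * x)) ≤ (b ^ 2 + b) * cellSq (b * x) := by
  obtain ⟨D', h0', h1', hf', hr'⟩ := exists_digit hb x
  obtain ⟨D, h0, h1, hf, hr⟩ := exists_digit hb (b * x)
  have hb' : (2 : ℝ) ≤ b := by exact_mod_cast hb
  have s0 := Int.fract_nonneg ((b : ℝ) * (b * x))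
  have s1 := Int.fract_lt_one ((b : ℝ) * (b * x))
  have t0 := Int.fract_nonneg ((b : ℝ) * x)
  have t1 := Int.fract_lt_one ((b : ℝ) * x)
  unfold cellSq
  rw [hf, hf']
  push_cast
  set s := Int.fract ((b : ℝ) * (b * x))
  set t := Int.fract ((b : ℝ) * x)
  set t' := Int.fract x
  set F : ℝ := (⌊x⌋ : ℝ)
  have e1 : b * t' = D' + t := by linarith
  have e2 : b * t = D + s := by linarith
  have hD' : (0 : ℝ) ≤ D' := by exact_mod_cast h0'
  have hD : (0 : ℝ) ≤ D := by exact_mod_cast h0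
  have main : 0 ≤ (D + s) ^ 2 - D - s ^ 2 + b * D' * (b - D' - 2 * t) := by
    have hDD : (0 : ℝ) ≤ D * (D - 1) := by
      rcases (show D = 0 ∨ 1 ≤ D by omega) with h | h
      · simp [h]
      · have : (1 : ℝ) ≤ D := by exact_mod_cast h
        nlinarith
    by_cases hc : D' + 1 = b
    · have hc' : (D' : ℝ) = b - 1 := by
        have : ((D' + 1 : ℤ) : ℝ) = b := by rw [hc]; simp
        push_cast at this; linarith
      have hprod : (0 : ℝ) ≤ (b - 1 - D) * (b - D - 2 * s) := by
        rcases (show D + 1 = b ∨ D + 2 ≤ b by omega) with h | h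
        · have : ((D + 1 : ℤ) : ℝ) = b := by rw [h]; simp
          push_cast at this
          rw [show (b : ℝ) - 1 - D = 0 by linarith]; simp
        · have : ((D + 2 : ℤ) : ℝ) ≤ b := by exact_mod_cast h
          push_cast at this
          exact mul_nonneg (by linarith) (by linarith)
      have : (D + s) ^ 2 - D - s ^ 2 + b * D' * (b - D' - 2 * t) =
          (b - 1 - D) * (b - D - 2 * s) := by
        rw [hc']
        linear_combination (-2 * ((b : ℝ) - 1)) * e2
      linarith
    · have : ((D' + 2 : ℤ) : ℝ) ≤ b := by exact_mod_cast (show D' + 2 ≤ b by omega)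
      push_cast at this
      have h3 : 0 ≤ b * D' * (b - D' - 2 * t) :=
        mul_nonneg (by positivity) (by linarith)
      nlinarith [mul_nonneg hD s0]
  have e3 : (b : ℝ) ^ 3 * t' ^ 2 = b * (D' + t) ^ 2 := by rw [← e1]; ring
  have e4 : (b : ℝ) ^ 2 * t ^ 2 = (D + s) ^ 2 := by rw [← e2]; ring
  nlinarith [main, e3, e4]

/-- `cellSq` against its supporting estimates near `0` and near `1`. -/
lemma cellSq_mul_bounds {b : ℕ} (hb : 2 ≤ b) {z : ℝ} (hz0 : 0 ≤ z) (hz1 : z < 1) :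
    2 * (b - 1) * b * z ^ 2 ≤ (b ^ 2 - 2) * b * z ^ 2 - (b - 2) * cellSq (b * z) ∧
    (b - 1) * b * (2 * z ^ 2 + 2 * (b - 2) * z - (b - 2)) ≤
      (b ^ 2 - 2) * b * z ^ 2 - (b - 2) * cellSq (b * z) := by
  obtain ⟨D, h0, h1, hf, hr⟩ := exists_digit hb z
  have hb' : (2 : ℝ) ≤ b := by exact_mod_cast hb
  have s0 := Int.fract_nonneg ((b : ℝ) * z)
  have s1 := Int.fract_lt_one ((b : ℝ) * z)
  rw [Int.floor_eq_zero_iff.2 ⟨hz0, hz1⟩] at hf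
  rw [Int.fract_eq_self.2 ⟨hz0, hz1⟩] at hr
  unfold cellSq
  rw [hf]
  push_cast
  set s := Int.fract ((b : ℝ) * z)
  have hD : (0 : ℝ) ≤ D := by exact_mod_cast h0
  have hDD : (0 : ℝ) ≤ D * (D - 1) := by
    rcases (show D = 0 ∨ 1 ≤ D by omega) with h | h
    · simp [h]
    · have : (1 : ℝ) ≤ D := by exact_mod_cast h
      nlinarith
  have hE : (0 : ℝ) ≤ (b - 1 - D) * (b - D - 2 * s) := by
    rcases (show D + 1 = b ∨ D + 2 ≤ b by omega) with h | h
    · have : ((D + 1 : ℤ) : ℝ) = b := by rw [h]; simp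
      push_cast at this
      rw [show (b : ℝ) - 1 - D = 0 by linarith]; simp
    · have : ((D + 2 : ℤ) : ℝ) ≤ b := by exact_mod_cast h
      push_cast at this
      exact mul_nonneg (by linarith) (by linarith)
  have e : b * z = D + s := by linarith
  have hb2 : (0 : ℝ) ≤ b - 2 := by linarith
  have e4 : (b : ℝ) ^ 2 * z ^ 2 = (D + s) ^ 2 := by rw [← e]; ring
  constructor
  · have key := mul_nonneg hb2 (show (0 : ℝ) ≤ D * (D - 1) + 2 * D * s by positivity)
    linear_combination key - (b - 2) * e4
  · have key := mul_nonneg hb2 hE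
    linear_combination key - (b - 2) * e4 + 2 * (b - 1) * (b - 2) * e

lemma length_sq_le {b : ℕ} (hb : 2 ≤ b) {n : ℕ} (hn : n + 2 ≤ b) {z Z : ℝ}
    (hz0 : 0 ≤ z) (hz1 : z < 1) (hZ0 : 0 ≤ Z) (hZ1 : Z < 1) :
    (b - 1) * b * (n + z + Z) ^ 2 ≤ (b ^ 2 - 2) * b * (n + z ^ 2 + Z ^ 2)
      - (b - 2) * (b * n + cellSq (b * z) + cellSq (b * Z)) := by
  obtain ⟨a1, a2⟩ := cellSq_mul_bounds hb hz0 hz1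
  obtain ⟨c1, c2⟩ := cellSq_mul_bounds hb hZ0 hZ1
  have hb' : (2 : ℝ) ≤ b := by exact_mod_cast hb
  have hn' : (n : ℝ) + 2 ≤ b := by exact_mod_cast hn
  have hn0 : (0 : ℝ) ≤ n := by positivity
  have hbb : (0 : ℝ) ≤ (b - 1) * b := mul_nonneg (by linarith) (by linarith)
  have interp : ∀ x f : ℝ, 2 * (b - 1) * b * x ^ 2 ≤ f →
      (b - 1) * b * (2 * x ^ 2 + 2 * (b - 2) * x - (b - 2)) ≤ f →
      (b - 1) * b * (2 * x ^ 2 + n * (2 * x - 1)) ≤ f := by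
    intro x f h1 h2
    rcases le_total (2 * x - 1) 0 with h | h
    · nlinarith [mul_nonneg hbb (mul_nonneg hn0 (neg_nonneg.2 h))]
    · nlinarith [mul_nonneg hbb (mul_nonneg (show (0 : ℝ) ≤ b - 2 - n by linarith) h)]
  have i1 := interp _ _ a1 a2
  have i2 := interp _ _ c1 c2
  have i3 : (0 : ℝ) ≤ (b - 1) * b * ((z - Z) ^ 2 + n * (b - 2 - n)) :=
    mul_nonneg hbb (add_nonneg (sq_nonneg _) (mul_nonneg hn0 (by linarith)))
  linear_combination i1 + i2 + i3

/-- The measure of the pairs in `[a, c)²` whose points share a cell of the grid `ℤ / N`. -/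
noncomputable def pairVol (N a c : ℝ) : ℝ :=
  volume.real {p : ℝ × ℝ | p.1 ∈ Set.Ico a c ∧ p.2 ∈ Set.Ico a c ∧ ⌊N * p.1⌋ = ⌊N * p.2⌋}

lemma measurableSet_samecell (N a c : ℝ) : MeasurableSet
    {p : ℝ × ℝ | p.1 ∈ Set.Ico a c ∧ p.2 ∈ Set.Ico a c ∧ ⌊N * p.1⌋ = ⌊N * p.2⌋} := by
  refine (measurable_fst measurableSet_Ico).inter ((measurable_snd measurableSet_Ico).inter ?_)
  exact measurableSet_eq_fun (Int.measurable_floor.comp (measurable_fst.const_mul N))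
    (Int.measurable_floor.comp (measurable_snd.const_mul N))

lemma volume_samecell_ne_top (N a c : ℝ) : volume
    {p : ℝ × ℝ | p.1 ∈ Set.Ico a c ∧ p.2 ∈ Set.Ico a c ∧ ⌊N * p.1⌋ = ⌊N * p.2⌋} ≠ ⊤ := by
  refine measure_ne_top_of_subset (s := Set.Ico a c ×ˢ Set.Ico a c)
    (fun p hp => ⟨hp.1, hp.2.1⟩) ?_
  rw [Measure.volume_eq_prod, Measure.prod_prod, Real.volume_Ico]
  exact ENNReal.mul_ne_top ENNReal.ofReal_ne_top ENNReal.ofReal_ne_top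

lemma pairVol_split {N p : ℝ} (hN : 0 < N) {m : ℤ} (hp : N * p = m) {a c : ℝ}
    (hap : a ≤ p) (hpc : p ≤ c) : pairVol N a c = pairVol N a p + pairVol N p c := by
  have hlt : ∀ x, x < p → ⌊N * x⌋ < m := fun x hx => by
    rw [Int.floor_lt, ← hp]; exact mul_lt_mul_of_pos_left hx hN
  have hge : ∀ x, p ≤ x → m ≤ ⌊N * x⌋ := fun x hx => by
    rw [Int.le_floor, ← hp]; exact mul_le_mul_of_nonneg_left hx hN.le
  unfold pairVol
  rw [← measureReal_union ?_ (measurableSet_samecell N p c) (volume_samecell_ne_top _ _ _)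
    (volume_samecell_ne_top _ _ _)]
  · congr 1
    ext ⟨x, y⟩
    simp only [Set.mem_ofPred_eq, Set.mem_union, Set.mem_Ico]
    constructor
    · rintro ⟨⟨x1, x2⟩, ⟨y1, y2⟩, h⟩
      rcases lt_or_ge x p with hx | hx <;> rcases lt_or_ge y p with hy | hy
      · exact Or.inl ⟨⟨x1, hx⟩, ⟨y1, hy⟩, h⟩
      · have := hlt x hx; have := hge y hy; omega
      · have := hlt y hy; have := hge x hx; omega
      · exact Or.inr ⟨⟨hx, x2⟩, ⟨hy, y2⟩, h⟩
    · rintro (⟨⟨x1, x2⟩, ⟨y1, y2⟩, h⟩ | ⟨⟨x1, x2⟩, ⟨y1, y2⟩, h⟩)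
      · exact ⟨⟨x1, by linarith⟩, ⟨y1, by linarith⟩, h⟩
      · exact ⟨⟨by linarith, x2⟩, ⟨by linarith, y2⟩, h⟩
  · rw [Set.disjoint_left]
    rintro ⟨x, y⟩ h h'
    exact absurd h.1.2 (not_lt.2 h'.1.1)

lemma pairVol_of_floor_eq {N a c : ℝ} (hac : a ≤ c) (m : ℤ)
    (h : ∀ x ∈ Set.Ico a c, ⌊N * x⌋ = m) : pairVol N a c = (c - a) ^ 2 := by
  have : {p : ℝ × ℝ | p.1 ∈ Set.Ico a c ∧ p.2 ∈ Set.Ico a c ∧ ⌊N * p.1⌋ = ⌊N * p.2⌋} =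
      Set.Ico a c ×ˢ Set.Ico a c := by
    ext ⟨x, y⟩
    simp only [Set.mem_ofPred_eq, Set.mem_prod]
    exact ⟨fun h' => ⟨h'.1, h'.2.1⟩, fun h' => ⟨h'.1, h'.2, by rw [h _ h'.1, h _ h'.2]⟩⟩
  rw [pairVol, this, Measure.volume_eq_prod, measureReal_prod_prod, Real.volume_real_Ico_of_le hac]
  ring

lemma pairVol_cell {N a c : ℝ} (hN : 0 < N) (hac : a ≤ c) (m : ℤ) (h1 : m ≤ N * a)
    (h2 : N * c ≤ m + 1) : pairVol N a c = (c - a) ^ 2 := by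
  refine pairVol_of_floor_eq hac m fun x hx => ?_
  rw [Int.floor_eq_iff]
  exact ⟨h1.trans (mul_le_mul_of_nonneg_left hx.1 hN.le),
    (mul_lt_mul_of_pos_left hx.2 hN).trans_le h2⟩

lemma pairVol_natCast_right {N t : ℝ} (hN : 0 < N) (h0 : 0 ≤ t) (h1 : t < 1) (n : ℕ) :
    ∀ (p : ℝ) (m : ℤ), N * p = m → pairVol N p (p + (n + t) / N) = (n + t ^ 2) / N ^ 2 := by
  induction n with
  | zero =>
    intro p m hp
    rw [pairVol_cell hN (by simp; positivity) m hp.ge]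
    · simp; ring
    · rw [mul_add, hp]; field_simp; simp; linarith
  | succ n ih =>
    intro p m hp
    have e : N * (p + 1 / N) = ((m + 1 : ℤ) : ℝ) := by rw [mul_add, hp]; field_simp; push_cast; ring
    rw [pairVol_split hN e (by simp; positivity), show p + ((n + 1 : ℕ) + t) / N =
      p + 1 / N + (n + t) / N by push_cast; ring, ih _ _ e, pairVol_cell hN _ m hp.ge]
    · push_cast; field_simp; ring
    · rw [e]; push_cast; rfl
    · simp; positivity
    · push_cast; rw [add_le_add_iff_left]; gcongr; linarith [show (0 : ℝ) ≤ n by positivity]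

lemma pairVol_natCast_left {N t : ℝ} (hN : 0 < N) (h0 : 0 ≤ t) (h1 : t < 1) (n : ℕ) :
    ∀ (p : ℝ) (m : ℤ), N * p = m → pairVol N (p - (n + t) / N) p = (n + t ^ 2) / N ^ 2 := by
  induction n with
  | zero =>
    intro p m hp
    rw [pairVol_cell hN (by simp; positivity) (m - 1)]
    · simp; ring
    · rw [mul_sub, hp]; field_simp; simp; linarith
    · rw [hp]; push_cast; linarith
  | succ n ih =>
    intro p m hp
    have e : N * (p - 1 / N) = ((m - 1 : ℤ) : ℝ) := by rw [mul_sub, hp]; field_simp; push_cast; ring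
    rw [pairVol_split hN e _ (by simp; positivity), show p - ((n + 1 : ℕ) + t) / N =
      p - 1 / N - (n + t) / N by push_cast; ring, ih _ _ e, pairVol_cell hN _ (m - 1) e.ge]
    · push_cast; field_simp; ring
    · rw [hp]; push_cast; linarith
    · simp; positivity
    · push_cast; rw [sub_le_sub_iff_left]; gcongr; linarith [show (0 : ℝ) ≤ n by positivity]

lemma exists_floor_form {N z : ℝ} (hN : 0 < N) (hz : 0 ≤ z) :
    ∃ (n : ℕ) (t : ℝ), 0 ≤ t ∧ t < 1 ∧ z = (n + t) / N ∧ cellSq (N * z) = n + t ^ 2 := by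
  have hz' : 0 ≤ N * z := by positivity
  refine ⟨⌊N * z⌋.toNat, Int.fract (N * z), Int.fract_nonneg _, Int.fract_lt_one _, ?_, ?_⟩ <;>
  have : ((⌊N * z⌋.toNat : ℕ) : ℝ) = (⌊N * z⌋ : ℝ) := by
    exact_mod_cast Int.toNat_of_nonneg (Int.floor_nonneg.2 hz')
  · rw [this, Int.floor_add_fract]; field_simp
  · rw [this, cellSq]

lemma pairVol_right {N p z : ℝ} (hN : 0 < N) (hz : 0 ≤ z) {m : ℤ} (hp : N * p = m) :
    pairVol N p (p + z) = cellSq (N * z) / N ^ 2 := by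
  obtain ⟨n, t, h0, h1, rfl, h⟩ := exists_floor_form hN hz
  rw [h, pairVol_natCast_right hN h0 h1 n p m hp]

lemma pairVol_left {N p z : ℝ} (hN : 0 < N) (hz : 0 ≤ z) {m : ℤ} (hp : N * p = m) :
    pairVol N (p - z) p = cellSq (N * z) / N ^ 2 := by
  obtain ⟨n, t, h0, h1, rfl, h⟩ := exists_floor_form hN hz
  rw [h, pairVol_natCast_left hN h0 h1 n p m hp]

lemma pairVol_around {N p q z Z : ℝ} (hN : 0 < N) (hz : 0 ≤ z) (hZ : 0 ≤ Z) {m : ℤ}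
    (hp : N * p = m) {n : ℕ} (hq : N * (q - p) = n) :
    pairVol N (p - z) (q + Z) = (cellSq (N * z) + n + cellSq (N * Z)) / N ^ 2 := by
  have hq' : N * q = ((m + n : ℤ) : ℝ) := by push_cast; rw [← hp, ← hq]; ring
  have hpq : 0 ≤ q - p := by
    have : 0 ≤ N * (q - p) := by rw [hq]; positivity
    exact nonneg_of_mul_nonneg_right this hN
  have h1 := pairVol_right hN hpq hp
  rw [add_sub_cancel, hq] at h1
  have h2 : cellSq (n : ℝ) = n := by
    simpa using cellSq_natCast_add n (t := 0) le_rfl one_pos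
  rw [pairVol_split hN hp (by linarith) (by linarith),
    pairVol_split (a := p) hN hq' (by linarith) (by linarith),
    pairVol_left hN hz hp, pairVol_right hN hZ hq', h1, h2]
  ring

lemma floor_pow_eq_of_le {b : ℕ} (hb : 0 < b) {x y : ℝ} {i j : ℕ} (hij : i ≤ j)
    (h : ⌊(b : ℝ) ^ j * x⌋ = ⌊(b : ℝ) ^ j * y⌋) : ⌊(b : ℝ) ^ i * x⌋ = ⌊(b : ℝ) ^ i * y⌋ := by
  obtain ⟨k, rfl⟩ := Nat.exists_eq_add_of_le hij
  have hk : (b : ℝ) ^ k ≠ 0 := by positivity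
  have key : ∀ x : ℝ, ⌊(b : ℝ) ^ i * x⌋ = ⌊(b : ℝ) ^ (i + k) * x⌋ / ((b ^ k : ℕ) : ℤ) := by
    intro x
    rw [← Int.floor_div_natCast]
    congr 1
    rw [pow_add]; push_cast; field_simp
  rw [key x, key y, h]

lemma exists_floor_pow_ne {b : ℕ} (hb : 2 ≤ b) {x y : ℝ} (hxy : x ≠ y) :
    ∃ i : ℕ, ⌊(b : ℝ) ^ i * x⌋ ≠ ⌊(b : ℝ) ^ i * y⌋ := by
  have hb' : (1 : ℝ) < b := by exact_mod_cast hb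
  obtain ⟨i, hi⟩ := pow_unbounded_of_one_lt (1 / |x - y|) hb'
  refine ⟨i, fun h => ?_⟩
  have h1 := Int.abs_sub_lt_one_of_floor_eq_floor h
  have h2 : 0 < |x - y| := abs_pos.2 (sub_ne_zero.2 hxy)
  rw [← mul_sub, abs_mul, abs_of_nonneg (by positivity : (0 : ℝ) ≤ (b : ℝ) ^ i)] at h1
  rw [div_lt_iff₀ h2] at hi
  linarith

lemma gammaB_eq_iff {b : ℕ} (hb : 2 ≤ b) {x y : ℝ} (hx : x ∈ Set.Ico (0 : ℝ) 1)
    (hy : y ∈ Set.Ico (0 : ℝ) 1) (i : ℕ) :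
    (x ≠ y ∧ gammaB b x y = (i : ℕ∞)) ↔ (⌊(b : ℝ) ^ i * x⌋ = ⌊(b : ℝ) ^ i * y⌋ ∧
      ⌊(b : ℝ) ^ (i + 1) * x⌋ ≠ ⌊(b : ℝ) ^ (i + 1) * y⌋) := by
  set P : Set ℕ := {i : ℕ | ⌊(b : ℝ) ^ i * x⌋ = ⌊(b : ℝ) ^ i * y⌋ ∧
      ⌊(b : ℝ) ^ (i + 1) * x⌋ ≠ ⌊(b : ℝ) ^ (i + 1) * y⌋} with hP
  have huniq : ∀ i ∈ P, ∀ j ∈ P, i = j := by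
    intro i hi j hj
    rcases lt_trichotomy i j with h | h | h
    · exact absurd (floor_pow_eq_of_le (by omega) (show i + 1 ≤ j by omega) hj.1) hi.2
    · exact h
    · exact absurd (floor_pow_eq_of_le (by omega) (show j + 1 ≤ i by omega) hi.1) hj.2
  constructor
  · rintro ⟨hxy, hg⟩
    rw [gammaB, if_neg hxy] at hg
    have hg' : sInf P = i := Nat.cast_inj.1 hg
    have hne : P.Nonempty := by
      classical
      have hex := exists_floor_pow_ne hb hxy
      have hpos : Nat.find hex ≠ 0 := by
        intro h0
        have := Nat.find_spec hex
        rw [h0] at this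
        simp [Int.floor_eq_zero_iff.2 hx, Int.floor_eq_zero_iff.2 hy] at this
      obtain ⟨j, hj⟩ := Nat.exists_eq_succ_of_ne_zero hpos
      refine ⟨j, not_not.1 (Nat.find_min hex (by omega)), ?_⟩
      have := Nat.find_spec hex
      rwa [hj] at this
    rw [← hg']
    exact Nat.sInf_mem hne
  · intro hi
    have hxy : x ≠ y := by
      rintro rfl
      exact hi.2 rfl
    refine ⟨hxy, ?_⟩
    rw [gammaB, if_neg hxy]
    have : sInf P = i := huniq _ (Nat.sInf_mem ⟨i, hi⟩) _ hi
    exact Nat.cast_inj.2 this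

lemma Vvec_Ico {b : ℕ} (hb : 2 ≤ b) {a c : ℝ} (h : Set.Ico a c ⊆ Set.Ico 0 1) (i : ℕ) :
    Vvec b (Set.Ico a c) (Set.Ico a c) i =
      pairVol ((b : ℝ) ^ i) a c - pairVol ((b : ℝ) ^ (i + 1)) a c := by
  have hsub : {p : ℝ × ℝ | p.1 ∈ Set.Ico a c ∧ p.2 ∈ Set.Ico a c ∧
        ⌊(b : ℝ) ^ (i + 1) * p.1⌋ = ⌊(b : ℝ) ^ (i + 1) * p.2⌋} ⊆
      {p : ℝ × ℝ | p.1 ∈ Set.Ico a c ∧ p.2 ∈ Set.Ico a c ∧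
        ⌊(b : ℝ) ^ i * p.1⌋ = ⌊(b : ℝ) ^ i * p.2⌋} := fun p hp =>
    ⟨hp.1, hp.2.1, floor_pow_eq_of_le (by omega) (Nat.le_succ i) hp.2.2⟩
  unfold pairVol
  rw [← measureReal_sdiff hsub (measurableSet_samecell _ _ _) (volume_samecell_ne_top _ _ _),
    Vvec, measureReal_def]
  congr 2
  ext ⟨x, y⟩
  simp only [Set.mem_ofPred_eq, Set.mem_sdiff]
  constructor
  · rintro ⟨hx, hy, hg⟩
    obtain ⟨h1, h2⟩ := (gammaB_eq_iff hb (h hx) (h hy) i).1 hg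
    exact ⟨⟨hx, hy, h1⟩, fun h3 => h2 h3.2.2⟩
  · rintro ⟨⟨hx, hy, h1⟩, h2⟩
    exact ⟨hx, hy, (gammaB_eq_iff hb (h hx) (h hy) i).2 ⟨h1, fun h3 => h2 ⟨hx, hy, h3⟩⟩⟩

lemma cellSq_pow_div {b : ℝ} (hb : 2 ≤ b) (hbn : ∃ n : ℕ, b = n) (m i : ℕ) :
    cellSq (b ^ i * (1 / b ^ m)) / (b ^ i) ^ 2 =
      if m ≤ i then 1 / (b ^ m * b ^ i) else 1 / (b ^ m) ^ 2 := by
  obtain ⟨n, rfl⟩ := hbn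
  have h0 : (0 : ℝ) < n := by linarith
  split_ifs with h
  · obtain ⟨k, rfl⟩ := Nat.exists_eq_add_of_le h
    have e : (n : ℝ) ^ (m + k) * (1 / (n : ℝ) ^ m) = ((n ^ k : ℕ) : ℝ) + 0 := by
      rw [pow_add]; push_cast; field_simp; simp
    rw [e, cellSq_natCast_add _ le_rfl one_pos, pow_add]
    push_cast
    field_simp
    ring
  · have hlt : (n : ℝ) ^ i < (n : ℝ) ^ m := pow_lt_pow_right₀ (by linarith) (by omega)
    have e := cellSq_natCast_add 0 (t := (n : ℝ) ^ i * (1 / (n : ℝ) ^ m)) (by positivity)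
      (by rw [mul_one_div, div_lt_one (by positivity)]; exact hlt)
    simp only [Nat.cast_zero, zero_add] at e
    rw [e]
    field_simp

lemma cellSq_pow_sub {b : ℝ} (hb : 2 ≤ b) (hbn : ∃ n : ℕ, b = n) (m i : ℕ) :
    (b ^ m) ^ 2 * (cellSq (b ^ i * (1 / b ^ m)) / (b ^ i) ^ 2 -
      cellSq (b ^ (i + 1) * (1 / b ^ m)) / (b ^ (i + 1)) ^ 2) = geomFrom b m i := by
  have h0 : 0 < b := by linarith
  rw [cellSq_pow_div hb hbn, cellSq_pow_div hb hbn, geomFrom]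
  rcases lt_trichotomy (i + 1) m with h | rfl | h
  · rw [if_neg (by omega), if_neg (by omega), if_neg (by omega)]; simp
  · rw [if_neg (by omega), if_pos le_rfl, if_neg (by omega), ← sq]; simp
  · rw [if_pos (by omega), if_pos (by omega), if_pos (by omega), pow_succ]
    field_simp
    ring

lemma oneK_eq (b k : ℕ) : oneK b k = Set.Ico 0 (0 + 1 / (b : ℝ) ^ k) := by
  rw [oneK, zpow_neg, zpow_natCast, zero_add, one_div]

lemma Vvec_oneK {b : ℕ} (hb : 2 ≤ b) (k i : ℕ) :
    (b : ℝ) ^ (2 * k) * Vvec b (oneK b k) (oneK b k) i = geomFrom b k i := by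
  have hb' : (2 : ℝ) ≤ b := by exact_mod_cast hb
  have hk : 1 / (b : ℝ) ^ k ≤ 1 := by
    rw [div_le_one (by positivity)]; exact one_le_pow₀ (by linarith)
  have hz (j : ℕ) : (b : ℝ) ^ j * 0 = ((0 : ℤ) : ℝ) := by simp
  rw [oneK_eq, Vvec_Ico hb (Set.Ico_subset_Ico_right (by linarith)),
    pairVol_right (by positivity) (by positivity) (hz i),
    pairVol_right (by positivity) (by positivity) (hz (i + 1)), ← cellSq_pow_sub hb' ⟨b, rfl⟩]
  ring

section Rep

variable {b d h g n : ℕ} {z Z : ℝ}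

lemma pairVol_rep_of_le (hb : 2 ≤ b) (hg : 1 ≤ g) (hn : g + n + 1 ≤ b)
    (hz0 : 0 ≤ z) (hz1 : z ≤ 1 / (b : ℝ) ^ (d + 1))
    (hZ0 : 0 ≤ Z) (hZ1 : Z ≤ 1 / (b : ℝ) ^ (d + 1)) {i : ℕ} (hi : i ≤ d) :
    pairVol ((b : ℝ) ^ i) ((h * b + g) / (b : ℝ) ^ (d + 1) - z)
      ((h * b + g + n) / (b : ℝ) ^ (d + 1) + Z) = (n / (b : ℝ) ^ (d + 1) + z + Z) ^ 2 := by
  have hb' : (2 : ℝ) ≤ b := by exact_mod_cast hb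
  have hg' : (1 : ℝ) ≤ g := by exact_mod_cast hg
  have hn' : (g : ℝ) + n + 1 ≤ b := by exact_mod_cast hn
  have hp : (0 : ℝ) < (b : ℝ) ^ d := by positivity
  have hq : (0 : ℝ) < (b : ℝ) ^ (d + 1) := by positivity
  rw [pairVol_of_floor_eq _ ⌊(b : ℝ) ^ i * (h / (b : ℝ) ^ d)⌋]
  · ring
  · intro x hx
    apply floor_pow_eq_of_le (by omega) hi
    rw [show (b : ℝ) ^ d * (h / (b : ℝ) ^ d) = ((h : ℤ) : ℝ) by field_simp; simp, Int.floor_intCast,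
      Int.floor_eq_iff]
    have e1 : (h : ℝ) / (b : ℝ) ^ d = (h * b) / (b : ℝ) ^ (d + 1) := by rw [pow_succ]; field_simp
    have e2 : ((h : ℝ) + 1) / (b : ℝ) ^ d = (h * b + b) / (b : ℝ) ^ (d + 1) := by
      rw [pow_succ]; field_simp
    have l1 : (h * b : ℝ) / (b : ℝ) ^ (d + 1) ≤
        (h * b + g) / (b : ℝ) ^ (d + 1) - 1 / b ^ (d + 1) := by
      rw [← sub_div]; exact div_le_div_of_nonneg_right (by linarith) hq.le
    have l2 : (h * b + g + n) / (b : ℝ) ^ (d + 1) + 1 / b ^ (d + 1) ≤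
        (h * b + b) / (b : ℝ) ^ (d + 1) := by
      rw [← add_div]; exact div_le_div_of_nonneg_right (by linarith) hq.le
    push_cast
    constructor
    · rw [← div_le_iff₀' hp, e1]; linarith [hx.1]
    · rw [← lt_div_iff₀' hp, e2]; linarith [hx.2]
  · have : (h * b + g : ℝ) / (b : ℝ) ^ (d + 1) ≤ (h * b + g + n) / (b : ℝ) ^ (d + 1) :=
      div_le_div_of_nonneg_right (by linarith [show (0 : ℝ) ≤ n by positivity]) hq.le
    linarith

lemma pairVol_rep_add (hb : 2 ≤ b) (hz0 : 0 ≤ z) (hZ0 : 0 ≤ Z) (j : ℕ) :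
    pairVol ((b : ℝ) ^ (d + 1 + j)) ((h * b + g) / (b : ℝ) ^ (d + 1) - z)
      ((h * b + g + n) / (b : ℝ) ^ (d + 1) + Z) =
    (cellSq ((b : ℝ) ^ (d + 1 + j) * z) + n * (b : ℝ) ^ j + cellSq ((b : ℝ) ^ (d + 1 + j) * Z)) /
      ((b : ℝ) ^ (d + 1 + j)) ^ 2 := by
  have hb' : (0 : ℝ) < b := by exact_mod_cast (by omega : 0 < b)
  rw [pairVol_around (by positivity) hz0 hZ0 (m := (h * b + g) * b ^ j) (n := n * b ^ j)]
  · push_cast; rfl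
  · rw [pow_add]; push_cast; field_simp
  · rw [pow_add]; push_cast; field_simp; ring

end Rep

lemma Yint_eq (b k d : ℕ) : Yint b k d =
    Set.Ico (((0 : ℕ) * b + (1 : ℕ)) / (b : ℝ) ^ (d + 1) - 1 / (b : ℝ) ^ (d + 2 + k))
      (((0 : ℕ) * b + (1 : ℕ) + (0 : ℕ)) / (b : ℝ) ^ (d + 1) + 1 / (b : ℝ) ^ (d + 2 + k)) := by
  have e1 : (b : ℝ) ^ (-((d : ℤ) + 1)) = 1 / (b : ℝ) ^ (d + 1) := by
    rw [zpow_neg, one_div]; norm_cast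
  have e2 : (b : ℝ) ^ (-((2 : ℤ) + k + d)) = 1 / (b : ℝ) ^ (d + 2 + k) := by
    rw [zpow_neg, one_div, show d + 2 + k = 2 + k + d by ring]; norm_cast
  rw [Yint, e1, e2]
  simp

lemma Vvec_Yint {b : ℕ} (hb : 2 ≤ b) (k d i : ℕ) :
    (b : ℝ) ^ (2 * (d + 2 + k)) / 4 * Vvec b (Yint b k d) (Yint b k d) i =
      (if i = d then 1 / 2 else 0) + 1 / 2 * geomFrom b (d + 2 + k) i := by
  have hb' : (2 : ℝ) ≤ b := by exact_mod_cast hb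
  have hw : 1 / (b : ℝ) ^ (d + 2 + k) ≤ 1 / (b : ℝ) ^ (d + 1) :=
    one_div_le_one_div_of_le (by positivity) (pow_le_pow_right₀ (by linarith) (by omega))
  have hw0 : 0 ≤ 1 / (b : ℝ) ^ (d + 2 + k) := by positivity
  have hu : 1 / (b : ℝ) ^ (d + 1) ≤ 1 / 2 := by
    gcongr
    exact hb'.trans (le_self_pow₀ (by linarith) (by omega))
  have hsub : Yint b k d ⊆ Set.Ico 0 1 := by
    rw [Yint_eq]
    apply Set.Ico_subset_Ico <;> simp only [Nat.cast_zero, zero_mul, zero_add, Nat.cast_one,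
      add_zero] <;> linarith
  have hlow := fun (i : ℕ) (hi : i ≤ d) => pairVol_rep_of_le (d := d) (h := 0) (n := 0) hb le_rfl
    (show 1 + 0 + 1 ≤ b by omega) hw0 hw hw0 hw hi
  have hhigh := pairVol_rep_add (b := b) (d := d) (h := 0) (g := 1) (n := 0) hb hw0 hw0
  rw [Yint_eq] at hsub ⊢
  rw [Vvec_Ico hb hsub]
  rcases lt_trichotomy i d with hi | rfl | hi
  · rw [hlow i hi.le, hlow (i + 1) hi, geomFrom, if_neg hi.ne, if_neg (by omega)]
    simp
  · have h1 := hhigh 0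
    have h2 := cellSq_pow_div hb' ⟨b, rfl⟩ (i + 2 + k) (i + 1)
    rw [if_neg (by omega)] at h2
    rw [add_zero] at h1
    rw [hlow i le_rfl, h1, geomFrom, if_pos rfl, if_neg (by omega)]
    simp only [Nat.cast_zero, zero_mul, zero_div, zero_add, add_zero, mul_zero]
    rw [add_div, h2, pow_mul']
    field_simp
    norm_num
  · obtain ⟨j, rfl⟩ := Nat.exists_eq_add_of_le (show d + 1 ≤ i from hi)
    have h1 := hhigh j
    have h2 := hhigh (j + 1)
    rw [← add_assoc] at h2
    rw [h1, h2, if_neg (by omega), ← cellSq_pow_sub hb' ⟨b, rfl⟩]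
    simp only [Nat.cast_zero, zero_mul, add_zero]
    ring

lemma pairVol_rep_decomp {b d h g n : ℕ} {z Z : ℝ} (hb : 2 ≤ b) (hg : 1 ≤ g) (hn : g + n + 1 ≤ b)
    (hz0 : 0 ≤ z) (hz1 : z < 1 / (b : ℝ) ^ (d + 1))
    (hZ0 : 0 ≤ Z) (hZ1 : Z < 1 / (b : ℝ) ^ (d + 1)) {a c : ℝ}
    (ha : a = (h * b + g) / (b : ℝ) ^ (d + 1) - z)
    (hc : c = (h * b + g + n) / (b : ℝ) ^ (d + 1) + Z) (hsub : Set.Ico a c ⊆ Set.Ico 0 1) :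
    ∃ α τ : ℕ → ℝ, (∀ k, 0 ≤ α k) ∧ (∀ k, 0 ≤ τ k) ∧ (∑' k, (α k + τ k)) = (c - a) ^ 2 ∧
      ∀ i, Vvec b (Set.Ico a c) (Set.Ico a c) i =
        (∑' k, α k * ((if i = d then 1 / 2 else 0) + 1 / 2 * geomFrom b (d + 2 + k) i)) +
        ∑' k, τ k * geomFrom b k i := by
  have hb' : (2 : ℝ) ≤ b := by exact_mod_cast hb
  have h0 : (0 : ℝ) < b := by linarith
  have hlow : ∀ i ≤ d, pairVol ((b : ℝ) ^ i) a c = (n / (b : ℝ) ^ (d + 1) + z + Z) ^ 2 :=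
    fun i hi => by rw [ha, hc]; exact pairVol_rep_of_le hb hg hn hz0 hz1.le hZ0 hZ1.le hi
  have hhigh := pairVol_rep_add (d := d) (h := h) (g := g) (n := n) hb hz0 hZ0
  rw [← ha, ← hc] at hhigh
  have hlen : (c - a) ^ 2 = pairVol ((b : ℝ) ^ 0) a c := by
    rw [hlow 0 (Nat.zero_le _), ha, hc]; ring
  have hv := Vvec_Ico hb hsub
  rw [hlen]
  refine exists_geom_decomp hb' d _ (fun i => pairVol ((b : ℝ) ^ i) a c) hv
    (fun i => ENNReal.toReal_nonneg) ?_ ?_ ?_ ?_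
  · rw [← Filter.tendsto_add_atTop_iff_nat (d + 1)]
    have hlim : Filter.Tendsto (fun j : ℕ => (z + n + Z) * (1 / (b : ℝ)) ^ j)
        Filter.atTop (nhds 0) := by
      simpa using (tendsto_pow_atTop_nhds_zero_of_lt_one (r := 1 / (b : ℝ)) (by positivity)
        (by rw [div_lt_one h0]; linarith)).const_mul (z + n + Z)
    refine squeeze_zero (fun j => measureReal_nonneg) (fun j => ?_) hlim
    rw [add_comm j, hhigh]
    have hN : (b : ℝ) ^ j ≤ (b : ℝ) ^ (d + 1 + j) :=
      pow_le_pow_right₀ (by linarith) (by omega)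
    have hj : (0 : ℝ) < (b : ℝ) ^ j := by positivity
    have l1 := cellSq_le ((b : ℝ) ^ (d + 1 + j) * z)
    have l2 := cellSq_le ((b : ℝ) ^ (d + 1 + j) * Z)
    have hn0 : (0 : ℝ) ≤ n := by positivity
    set N := (b : ℝ) ^ (d + 1 + j)
    have hNpos : 0 < N := by positivity
    calc _ ≤ (N * (z + n + Z)) / N ^ 2 := by
          gcongr
          nlinarith
      _ = (z + n + Z) * (1 / N) := by field_simp
      _ ≤ (z + n + Z) * (1 / (b : ℝ) ^ j) := by gcongr
      _ = _ := by rw [one_div_pow]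
  · intro i hi
    rw [hv, hlow i hi.le, hlow (i + 1) hi, sub_self]
  · intro i hi
    obtain ⟨j, rfl⟩ := Nat.exists_eq_add_of_le hi
    have e : ∀ x : ℝ, (b : ℝ) ^ (d + 1 + (j + 1)) * x = b * ((b : ℝ) ^ (d + 1 + j) * x) :=
      fun x => by ring
    have e' : ∀ x : ℝ, (b : ℝ) ^ (d + 1 + (j + 1 + 1)) * x =
      b * (b * ((b : ℝ) ^ (d + 1 + j) * x)) := fun x => by ring
    rw [hv, hv, add_assoc (d + 1), add_assoc (d + 1), hhigh, hhigh, hhigh]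
    have k1 := cellSq_convex hb ((b : ℝ) ^ (d + 1 + j) * z)
    have k2 := cellSq_convex hb ((b : ℝ) ^ (d + 1 + j) * Z)
    simp only [e, e']
    set N := (b : ℝ) ^ (d + 1 + j)
    have p1 : (b : ℝ) ^ (d + 1 + (j + 1)) = b * N := by simp only [N]; ring
    have p2 : (b : ℝ) ^ (d + 1 + (j + 1 + 1)) = b * (b * N) := by simp only [N]; ring
    rw [p1, p2, pow_succ _ (j + 1), pow_succ _ j]
    have hN : 0 < N := by positivity
    rw [← sub_nonneg]
    have hfac : 0 ≤ 1 / (b ^ 3 * N ^ 2) := by positivity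
    have key := mul_nonneg hfac (sub_nonneg.2 (add_le_add k1 k2))
    refine key.trans_eq ?_
    field_simp
    ring
  · have a0 := hlow d le_rfl
    have a1 := hhigh 0
    have a2 := hhigh 1
    rw [add_zero] at a1
    have hN : (0 : ℝ) < (b : ℝ) ^ (d + 1) := by positivity
    rw [lt_div_iff₀' hN] at hz1 hZ1
    have c1 := cellSq_natCast_add 0 (by positivity) hz1
    have c2 := cellSq_natCast_add 0 (by positivity) hZ1
    simp only [Nat.cast_zero, zero_add] at c1 c2
    have key := length_sq_le hb (show n + 2 ≤ b by omega) (by positivity) hz1 (by positivity) hZ1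
    have e : ∀ x : ℝ, (b : ℝ) ^ (d + 1 + 1) * x = b * ((b : ℝ) ^ (d + 1) * x) := fun x => by ring
    rw [hv, hv, a0]
    simp only [show d + 2 = d + 1 + 1 from rfl]
    rw [a1, a2, c1, c2]
    simp only [e]
    rw [pow_succ _ (d + 1)]
    set N := (b : ℝ) ^ (d + 1)
    have hb1 : (0 : ℝ) < b - 1 := by linarith
    have hfac : 0 ≤ 1 / (b * (b - 1) * N ^ 2) := by positivity
    rw [← sub_nonneg]
    refine (mul_nonneg hfac (sub_nonneg.2 key)).trans_eq ?_
    have := hb1.ne'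
    field_simp
    ring

/-- Decomposition of the volume vector of `A × A`, for a half-open interval `A ⊆ [0,1)`:
with `r` the smallest positive integer admitting the representation (and `r = 1` when
`A = [0,1)`), there are nonnegative `(α_k)`, `(τ_k)` with `Σ_k (α_k + τ_k) = Vol(A × A)`
(the square of the length of `A`) and, for every `i`,
`V_i(A×A) = Σ_k α_k (b^{2(k+r+1)}/4) V_i(Y_k^{(r−1)} × Y_k^{(r−1)}) + Σ_k τ_k b^{2k} V_i(1_k × 1_k)`. -/
theorem claim_decompA (b : ℕ) (hb : 2 ≤ b) (A : Set ℝ) (a c : ℝ)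
    (hA : A = Set.Ico a c) (hac : a < c) (hsub : A ⊆ Set.Ico (0 : ℝ) 1)
    (r : ℕ)
    (hr1 : A = Set.Ico (0 : ℝ) 1 → r = 1)
    (hr2 : A ≠ Set.Ico (0 : ℝ) 1 →
      1 ≤ r ∧ IsRep b A r ∧ ∀ r', 1 ≤ r' → IsRep b A r' → r ≤ r') :
    ∃ α τ : ℕ → ℝ, (∀ k, 0 ≤ α k) ∧ (∀ k, 0 ≤ τ k) ∧
      (∑' k : ℕ, (α k + τ k)) = (c - a) ^ 2 ∧
      ∀ i : ℕ, Vvec b A A i =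
        (∑' k : ℕ, α k * ((b : ℝ) ^ (2 * (k + r + 1)) / 4) *
          Vvec b (Yint b k (r - 1)) (Yint b k (r - 1)) i) +
        (∑' k : ℕ, τ k * (b : ℝ) ^ (2 * k) * Vvec b (oneK b k) (oneK b k) i) := by
  subst hA
  by_cases hfull : Set.Ico a c = Set.Ico (0 : ℝ) 1
  · have h1 : oneK b 0 = Set.Ico (0 : ℝ) 1 := by simp [oneK]
    obtain ⟨rfl, rfl⟩ := (Set.Ico_eq_Ico_iff (Or.inl hac)).1 hfull
    refine ⟨0, fun k => if k = 0 then 1 else 0, fun k => le_rfl,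
      fun k => by dsimp only; split_ifs <;> norm_num, by simp, fun i => ?_⟩
    rw [tsum_eq_single 0 (fun k hk => by simp), tsum_eq_single 0 (fun k hk => by simp [hk]), h1]
    simp
  · obtain ⟨hr, ⟨h, g, G, z, Z, hg, hgG, hG, hz0, hz1, hZ0, hZ1, hrep⟩, -⟩ := hr2 hfull
    obtain ⟨d, rfl⟩ := Nat.exists_eq_add_of_le' hr
    obtain ⟨n, rfl⟩ := Nat.exists_eq_add_of_le hgG
    obtain ⟨ha, hc⟩ := (Set.Ico_eq_Ico_iff (Or.inl hac)).1 hrep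
    have hb0 : (b : ℝ) ≠ 0 := by positivity
    have e1 : (b : ℝ) ^ (-((d + 1 : ℕ) : ℤ)) = 1 / (b : ℝ) ^ (d + 1) := by
      rw [zpow_neg, zpow_natCast, one_div]
    have e2 : (b : ℝ) ^ (1 - ((d + 1 : ℕ) : ℤ)) = b / (b : ℝ) ^ (d + 1) := by
      rw [zpow_sub₀ hb0, zpow_natCast, zpow_one]
    rw [e1] at hz1 hZ1 ha hc
    rw [e2] at ha hc
    obtain ⟨α, τ, hα, hτ, hsum, hdec⟩ := pairVol_rep_decomp (h := h) hb hg hG hz0 hz1 hZ0 hZ1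
      (by rw [ha]; ring) (by rw [hc]; push_cast; ring) hsub
    refine ⟨α, τ, hα, hτ, hsum, fun i => ?_⟩
    rw [hdec i]
    congr 2 <;> funext k
    · rw [← Vvec_Yint hb, Nat.add_sub_cancel, mul_assoc,
        show k + (d + 1) + 1 = d + 2 + k by ring]
    · rw [← Vvec_oneK hb, mul_assoc]
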